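/- Let d be an odd positive integer and let 𝒟 = {D₁, D₂} be nontrivial partitions of d (neither equal to [d] nor to [1,…,1]) with ν(D₁) + ν(D₂) = d − 1 and ν(D₁) ≥ ν(D₂). Suppose 𝒟 ≠ {[2,…,2,1], [2,…,2,1]}, gcd(D₁) = 1, and every part of D₁ is at least 3. Then for every permutation α of the d-element set with cycle type D₁ there exists a permutation β with cycle type D₂ such that ⟨α, β⟩ is a primitive permutation group. -/

import Mathlib

/-- The cycle type of a permutation, including fixed points as parts equal to `1`. -/
def fullCycleType {Ω : Type*} [Fintype Ω] [DecidableEq Ω] (σ : Equiv.Perm Ω) : Multiset ℕ :=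
  σ.cycleType + Multiset.replicate (Fintype.card Ω - σ.support.card) 1

/-- A multiset of positive integers summing to `d`, i.e. a partition of `d`. -/
def IsPartitionOf (d : ℕ) (D : Multiset ℕ) : Prop :=
  (∀ x ∈ D, 0 < x) ∧ D.sum = d

/-- The defect `ν(D) = Σⱼ (dⱼ − 1)` of a partition. -/
def nu (D : Multiset ℕ) : ℕ := (D.map (· - 1)).sum

/-- The partition `[2,…,2,1]` of an odd number `d`, with `(d−1)/2` parts equal to `2`. -/
def twosAndOne (d : ℕ) : Multiset ℕ := Multiset.replicate ((d - 1) / 2) 2 + {1}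

/-- A subgroup of the symmetric group on `Ω` is transitive. -/
def SubgroupTransitive {Ω : Type*} (G : Subgroup (Equiv.Perm Ω)) : Prop :=
  ∀ x y : Ω, ∃ g ∈ G, g x = y

/-- `Λ` is a block for the subgroup `G` of the symmetric group on `Ω`. -/
def IsBlockOf {Ω : Type*} (G : Subgroup (Equiv.Perm Ω)) (Λ : Set Ω) : Prop :=
  Λ.Nonempty ∧ ∀ g ∈ G, (⇑g '' Λ = Λ ∨ Disjoint (⇑g '' Λ) Λ)

/-- A block is trivial if it is a singleton or the whole set. -/
def TrivialBlock {Ω : Type*} (Λ : Set Ω) : Prop :=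
  (∃ x, Λ = {x}) ∨ Λ = Set.univ

/-- A subgroup of the symmetric group is primitive: transitive with only trivial blocks. -/
def SubgroupPrimitive {Ω : Type*} (G : Subgroup (Equiv.Perm Ω)) : Prop :=
  SubgroupTransitive G ∧ ∀ Λ : Set Ω, IsBlockOf G Λ → TrivialBlock Λ

/-- A subgroup of the symmetric group is imprimitive: transitive but not primitive. -/
def SubgroupImprimitive {Ω : Type*} (G : Subgroup (Equiv.Perm Ω)) : Prop :=
  SubgroupTransitive G ∧ ¬ SubgroupPrimitive G

/-- The orbit of `x` under a subgroup `G` of the symmetric group on `Ω`. -/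
def orbSet {Ω : Type*} (G : Subgroup (Equiv.Perm Ω)) (x : Ω) : Set Ω :=
  {y | ∃ g ∈ G, g x = y}

/-- The number of orbits of a subgroup `G` of the symmetric group on `Ω`. -/
noncomputable def numOrbits {Ω : Type*} (G : Subgroup (Equiv.Perm Ω)) : ℕ :=
  Nat.card (Set.range (orbSet G))

open Equiv Equiv.Perm

theorem core_aux {Ω : Type*} [Finite Ω] (α β : Perm Ω) (r : Setoid Ω)
    (hα : ∀ x y, r (α x) (α y) ↔ r x y) (hβ : ∀ x y, r (β x) (β y) ↔ r x y)
    (htr : ∀ P : Ω → Prop, (∀ x, P (α x) ↔ P x) → (∀ x, P (β x) ↔ P x) → ∀ x y, P x → P y)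
    (hgcd : ∀ n : ℕ, (∀ x, n ∣ Function.minimalPeriod α x) → n = 1)
    (h1 : ∀ x, α x ≠ x)
    (hP2 : ∀ x y z, α.SameCycle x y → α.SameCycle x z → x ≠ y → x ≠ z → y ≠ z →
      β x ≠ x → β y ≠ y → β z = z)
    (hadj : ∀ x y, α.SameCycle x y → x ≠ y → β x ≠ x → β y ≠ y →
      (y = α x ∨ x = α y) ∧ α (α x) ≠ x)
    (hQ : ∀ x y, x ≠ y → β x ≠ x → β y ≠ y →
      (∀ i : ℕ, Function.minimalPeriod α ((β ^ i) x) = Function.minimalPeriod α ((β ^ i) y)) →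
      Function.minimalPeriod α (β x) = Function.minimalPeriod α x)
    (hm : ∀ x, ∃ y, y ≠ x ∧ r x y) : ∀ x y, r x y := by
  have hαz : ∀ (i : ℤ) x y, r ((α ^ i) x) ((α ^ i) y) ↔ r x y := by
    intro i
    induction i with
    | zero => simp
    | succ i ih => intro x y; rw [zpow_add_one, mul_apply, mul_apply, ih, hα]
    | pred i ih =>
      intro x y
      rw [zpow_sub_one, mul_apply, mul_apply, ih, ← hα]; simp
  have hβn : ∀ (i : ℕ) x y, r ((β ^ i) x) ((β ^ i) y) ↔ r x y := by
    intro i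
    induction i with
    | zero => simp
    | succ i ih => intro x y; rw [pow_succ, mul_apply, mul_apply, ih, hβ]
  have hper : ∀ x, (α ^ Function.minimalPeriod α x) x = x := by
    intro x
    have := Function.isPeriodicPt_minimalPeriod α x
    rw [← Equiv.Perm.iterate_eq_pow]; exact this
  -- orbit statement
  have horb : ∀ x, (∀ i : ℤ, r (β ((α ^ i) x)) ((α ^ i) x)) → ∀ z, ∃ i : ℤ, r z ((α ^ i) x) := by
    intro x hx z
    refine htr (fun z => ∃ i : ℤ, r z ((α ^ i) x)) ?_ ?_ x z ⟨0, by simp⟩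
    · intro z
      constructor
      · rintro ⟨i, hi⟩
        refine ⟨i - 1, ?_⟩
        rw [← hα, ← mul_apply α, ← zpow_one_add]; simpa using hi
      · rintro ⟨i, hi⟩
        refine ⟨1 + i, ?_⟩
        rw [zpow_one_add, mul_apply, hα]; exact hi
    · intro z
      constructor
      · rintro ⟨i, hi⟩
        exact ⟨i, (hβ _ _).1 (r.trans hi (r.symm (hx i)))⟩
      · rintro ⟨i, hi⟩
        exact ⟨i, r.trans ((hβ _ _).2 hi) (hx i)⟩
  -- claim A
  have hA : (∀ z, r (β z) z) → ∀ x y, r x y := by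
    intro hz
    have hαx : ∀ x, r (α x) x := by
      intro x
      let f : Quotient r → Quotient r := Quotient.map α (fun a b h => (hα a b).2 h)
      have hf : ∀ k : ℕ, f^[k] (Quotient.mk r x) = Quotient.mk r ((α ^ k) x) := by
        intro k
        induction k with
        | zero => simp
        | succ k ih => rw [Function.iterate_succ_apply', ih, pow_succ', mul_apply]; rfl
      have hn := hgcd (Function.minimalPeriod f (Quotient.mk r x)) (by
        intro z
        obtain ⟨i, hi⟩ := horb x (fun i => hz _) z
        rw [← Function.isPeriodicPt_iff_minimalPeriod_dvd]
        unfold Function.IsPeriodicPt Function.IsFixedPt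
        rw [hf]
        apply Quotient.sound
        have h2 := (hαz (Function.minimalPeriod α z) _ _).2 hi
        rw [zpow_natCast, hper, ← zpow_natCast, ← mul_apply, zpow_mul_comm, mul_apply] at h2
        have h3 := r.trans (r.symm h2) hi
        have h4 := (hαz _ _ _).1 h3
        rw [zpow_natCast] at h4
        exact h4)
      have h4 := Function.isPeriodicPt_minimalPeriod f (Quotient.mk r x)
      rw [hn] at h4
      unfold Function.IsPeriodicPt Function.IsFixedPt at h4
      rw [hf] at h4
      simpa using Quotient.exact h4
    intro x y
    refine htr (fun z => r x z) ?_ ?_ x y (r.refl x)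
    · exact fun z => ⟨fun h => r.trans h (hαx z), fun h => r.trans h (r.symm (hαx z))⟩
    · exact fun z => ⟨fun h => r.trans h (hz z), fun h => r.trans h (r.symm (hz z))⟩
  by_contra hcon
  have hA' : ¬ ∀ z, r (β z) z := fun h => hcon (hA h)
  -- block of non-fixed
  have hN : ∀ x y, ¬ r (β x) x → r x y → ¬ r (β y) y := fun x y hx hxy h =>
    hx (r.trans ((hβ _ _).2 hxy) (r.trans h (r.symm hxy)))
  have hB : ∀ x, ¬ r (β x) x → β x ≠ x := fun x hx h => hx (by rw [h])
  have hC : ∀ x y, ¬ r (β x) x → r x y → α.SameCycle x y → x = y := by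
    intro x y hx hxy hs
    by_contra hne
    have hy := hN x y hx hxy
    have key : ∀ x, ¬ r (β x) x → r x (α x) → α (α x) ≠ x → False := by
      intro x hx h ha
      have h2 : r x (α (α x)) := r.trans h ((hα _ _).2 h)
      exact hB _ (hN x _ hx h2) (hP2 x (α x) (α (α x)) ⟨1, by simp⟩ ⟨2, by rw [zpow_two, mul_apply]⟩
        (h1 x).symm ha.symm (h1 _).symm (hB x hx) (hB _ (hN x _ hx h)))
    obtain ⟨h, ha⟩ := hadj x y hs hne (hB _ hx) (hB _ hy)
    obtain ⟨-, ha'⟩ := hadj y x hs.symm (Ne.symm hne) (hB _ hy) (hB _ hx)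
    rcases h with h | h
    · exact key x hx (h ▸ hxy) ha
    · exact key y hy (h ▸ r.symm hxy) ha'
  have hD0 : ∀ x y, ¬ r (β x) x → r x y →
      Function.minimalPeriod α y ∣ Function.minimalPeriod α x := by
    intro x y hx hxy
    have h2 := (hαz (Function.minimalPeriod α x) _ _).2 hxy
    rw [zpow_natCast, hper] at h2
    have h3 := hC y _ (hN x y hx hxy) (r.trans (r.symm hxy) h2)
      ⟨Function.minimalPeriod α x, by rw [zpow_natCast]⟩
    apply Function.IsPeriodicPt.minimalPeriod_dvd
    unfold Function.IsPeriodicPt Function.IsFixedPt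
    rw [Equiv.Perm.iterate_eq_pow]; exact h3.symm
  have hinv : ∀ (i : ℤ) x, Function.minimalPeriod α ((α ^ i) x) = Function.minimalPeriod α x := by
    intro i x
    apply Nat.dvd_antisymm
    all_goals
      apply Function.IsPeriodicPt.minimalPeriod_dvd
      unfold Function.IsPeriodicPt Function.IsFixedPt
      rw [Equiv.Perm.iterate_eq_pow]
    · rw [← zpow_natCast, ← mul_apply, zpow_mul_comm, mul_apply, zpow_natCast, hper]
    · have := hper ((α ^ i) x)
      rw [← zpow_natCast, ← mul_apply, zpow_mul_comm, mul_apply, zpow_natCast] at this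
      exact (α ^ i).injective this
  have hE : ∀ x y, r x y → Function.minimalPeriod α x = Function.minimalPeriod α y := by
    intro x y hxy
    have : ∃ i : ℤ, ¬ r (β ((α ^ i) x)) ((α ^ i) x) := by
      by_contra hno
      push Not at hno
      apply hA'
      intro z
      obtain ⟨i, hi⟩ := horb x hno z
      exact r.trans ((hβ _ _).2 hi) (r.trans (hno i) (r.symm hi))
    obtain ⟨i, hi⟩ := this
    have h2 := (hαz i _ _).2 hxy
    rw [← hinv i x, ← hinv i y]
    exact Nat.dvd_antisymm (hD0 _ _ (hN _ _ hi h2) (r.symm h2)) (hD0 _ _ hi h2)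
  have hF : ∀ x, Function.minimalPeriod α (β x) = Function.minimalPeriod α x := by
    intro x
    by_cases hx : r (β x) x
    · exact hE _ _ hx
    · obtain ⟨y, hy, hxy⟩ := hm x
      exact hQ x y (Ne.symm hy) (hB _ hx) (hB _ (hN x y hx hxy))
        (fun i => hE _ _ ((hβn i _ _).2 hxy))
  have : ∃ x : Ω, True := by
    by_contra h
    push Not at h
    exact hcon fun x => (h x).elim
  obtain ⟨x, -⟩ := this
  have hconst : ∀ y, Function.minimalPeriod α y = Function.minimalPeriod α x := by
    intro y
    refine htr (fun y => Function.minimalPeriod α y = Function.minimalPeriod α x) ?_ ?_ x y rfl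
    · intro z
      have := hinv 1 z
      rw [zpow_one] at this
      simp only [this]
    · intro z; simp only [hF]
  have h5 := hgcd _ (fun y => by rw [hconst y])
  have := hper x
  rw [h5] at this
  exact h1 x (by simpa using this)

/-- monotone lists -/
theorem formPerm_const {Ω : Type*} [DecidableEq Ω] (l : List Ω) (hnd : l.Nodup) (f : Ω → ℕ)
    (hs : l.Pairwise (fun a b => f a ≤ f b)) (x y : Ω) (hx : x ∈ l) (hy : y ∈ l) (hxy : x ≠ y)
    (h : ∀ i : ℕ, f ((l.formPerm ^ i) x) = f ((l.formPerm ^ i) y)) :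
    ∀ u ∈ l, ∀ v ∈ l, f u = f v := by
  have hmono : ∀ (i j : ℕ) (hi : i < l.length) (hj : j < l.length), i ≤ j → f l[i] ≤ f l[j] := by
    intro i j hi hj hij
    rcases hij.eq_or_lt with rfl | hlt
    · rfl
    · exact List.pairwise_iff_getElem.1 hs i j hi hj hlt
  obtain ⟨p, hp, rfl⟩ := List.mem_iff_getElem.1 hx
  obtain ⟨q, hq, rfl⟩ := List.mem_iff_getElem.1 hy
  have main : ∀ p q : ℕ, ∀ (hp : p < l.length) (hq : q < l.length), p < q →
      (∀ i : ℕ, f ((l.formPerm ^ i) l[p]) = f ((l.formPerm ^ i) l[q])) →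
      ∀ u ∈ l, ∀ v ∈ l, f u = f v := by
    intro p q hp hq hpq h
    simp only [List.formPerm_pow_apply_getElem _ hnd] at h
    have e0 := h (l.length - p)
    have e1 := h (l.length - p + (l.length - 1))
    have a1 : (p + (l.length - p)) % l.length = 0 := by
      rw [show p + (l.length - p) = l.length by omega, Nat.mod_self]
    have a2 : (q + (l.length - p)) % l.length = q - p := by
      rw [show q + (l.length - p) = (q - p) + l.length by omega, Nat.add_mod_right,
        Nat.mod_eq_of_lt (by omega)]
    have a3 : (p + (l.length - p + (l.length - 1))) % l.length = l.length - 1 := by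
      rw [show p + (l.length - p + (l.length - 1)) = (l.length - 1) + l.length by omega,
        Nat.add_mod_right, Nat.mod_eq_of_lt (by omega)]
    have a4 : (q + (l.length - p + (l.length - 1))) % l.length = q - p - 1 := by
      rw [show q + (l.length - p + (l.length - 1)) = (q - p - 1) + l.length + l.length by omega,
        Nat.add_mod_right, Nat.add_mod_right, Nat.mod_eq_of_lt (by omega)]
    simp only [a1, a2, a3, a4] at e0 e1
    have e2 := hmono (q - p - 1) (q - p) (by omega) (by omega) (by omega)
    have e3 : ∀ u ∈ l, f u = f (l[0]'(by omega)) := by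
      intro u hu
      obtain ⟨i, hi, rfl⟩ := List.mem_iff_getElem.1 hu
      have b1 := hmono 0 i (by omega) hi (by omega)
      have b2 := hmono i (l.length - 1) hi (by omega) (by omega)
      omega
    intro u hu v hv
    rw [e3 u hu, e3 v hv]
  have hpq : p ≠ q := by rintro rfl; exact hxy rfl
  rcases lt_or_gt_of_ne hpq with hlt | hlt
  · exact main p q hp hq hlt h
  · exact main q p hq hp hlt (fun i => (h i).symm)

theorem build_aux {Ω : Type*} [Fintype Ω] [DecidableEq Ω] (α : Perm Ω) (f : Ω → ℕ)
    (hf : ∀ x, f (α x) = f x) (h1 : ∀ x, α x ≠ x) (ks : List ℕ) :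
    ∀ (a : Ω) (L : List Ω), (∀ k ∈ ks, 2 ≤ k) →
    (a :: L).Pairwise (fun u v => ¬ α.SameCycle u v ∧ f u ≤ f v) →
    L.length = (ks.map (· - 1)).sum →
    ∃ β : Perm Ω, β.cycleType = (ks : Multiset ℕ) ∧
      (∀ x, β x ≠ x → x = α a ∨ ∃ b ∈ L, x = b ∨ x = α b) ∧
      (∀ P : Ω → Prop, (∀ x, P (α x) ↔ P x) → (∀ x, P (β x) ↔ P x) → ∀ b ∈ L, P b ↔ P a) ∧
      (∀ x y, x ≠ y → β x ≠ x → β y ≠ y → (∀ i : ℕ, f ((β ^ i) x) = f ((β ^ i) y)) →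
        f (β x) = f x) := by
  induction ks with
  | nil =>
    intro a L _ _ hlen
    have : L = [] := by simpa using hlen
    subst this
    exact ⟨1, by simp, by simp, by simp, by simp⟩
  | cons k ks ih =>
    intro a L hk hL hlen
    have hk2 : 2 ≤ k := hk k (by simp)
    simp only [List.map_cons, List.sum_cons] at hlen
    obtain ⟨A, h, B, rfl, hA⟩ : ∃ A h B, L = A ++ h :: B ∧ A.length = k - 2 := by
      refine ⟨L.take (k - 2), L[k - 2]'(by omega), L.drop (k - 1), ?_, ?_⟩
      · rw [show k - 1 = k - 2 + 1 by omega, List.cons_getElem_drop_succ, List.take_append_drop]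
      · rw [List.length_take]; omega
    obtain ⟨haL, hL'⟩ := List.pairwise_cons.1 hL
    obtain ⟨hAA, hhB, hAB⟩ := List.pairwise_append.1 hL'
    obtain ⟨hhB1, hBB⟩ := List.pairwise_cons.1 hhB
    obtain ⟨β', hct, hsup, hconn, hQ⟩ := ih h B (fun k hk' => hk k (by simp [hk'])) hhB (by
      simp only [List.length_append, List.length_cons] at hlen
      omega)
    have hsc : ∀ u v, α.SameCycle (α u) v ↔ α.SameCycle u v := fun u v => by simp
    have hsc' : ∀ u v, α.SameCycle u (α v) ↔ α.SameCycle u v := fun u v => by simp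
    set l : List Ω := α a :: (A ++ [h]) with hl
    have hmem : ∀ x, x ∈ l ↔ x = α a ∨ x ∈ A ∨ x = h := by intro x; simp [hl]
    have hlp : l.Pairwise (fun u v => ¬ α.SameCycle u v ∧ f u ≤ f v) := by
      rw [hl, List.pairwise_cons, List.pairwise_append]
      refine ⟨?_, hAA, by simp, ?_⟩
      · intro x hx
        rw [hsc, hf]
        apply haL
        simp only [List.mem_append, List.mem_cons, List.not_mem_nil, or_false] at hx ⊢
        tauto
      · intro u hu v hv
        exact hAB u hu v (by simp at hv; simp [hv])
    have hnd : l.Nodup := by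
      apply List.Pairwise.imp _ hlp
      rintro u v ⟨huv, -⟩ rfl
      exact huv (SameCycle.refl _ _)
    have hlen2 : l.length = k := by simp [hl, hA]; omega
    have hlsup : ∀ x, l.formPerm x ≠ x ↔ x ∈ l := by
      intro x
      constructor
      · exact List.mem_of_formPerm_apply_ne
      · intro hx
        rw [List.formPerm_apply_mem_ne_self_iff _ hnd x hx]; omega
    have hdisj : Disjoint l.formPerm β' := by
      intro x
      by_contra hcon
      push Not at hcon
      obtain ⟨hx1, hx2⟩ := hcon
      rw [hlsup, hmem] at hx1
      have hx2 := hsup x hx2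
      have key : ∀ u ∈ a :: A, ∀ v ∈ h :: B, ¬ α.SameCycle u v := by
        intro u hu v hv
        rcases List.mem_cons.1 hu with rfl | hu
        · exact (haL v (by simp only [List.mem_append]; tauto)).1
        · exact (hAB u hu v hv).1
      have hx3 : ∃ v ∈ h :: B, α.SameCycle v x := by
        rcases hx2 with rfl | ⟨b, hb, rfl | rfl⟩
        · exact ⟨h, by simp, (hsc' _ _).2 (SameCycle.refl _ _)⟩
        · exact ⟨x, by simp [hb], SameCycle.refl _ _⟩
        · exact ⟨b, by simp [hb], (hsc' _ _).2 (SameCycle.refl _ _)⟩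
      obtain ⟨v, hv, hvx⟩ := hx3
      rcases hx1 with rfl | hx1 | rfl
      · exact key a (by simp) v hv ((hsc' _ _).1 hvx).symm
      · exact key x (by simp [hx1]) v hv hvx.symm
      · rcases hx2 with hx2 | ⟨b, hb, hx2 | hx2⟩
        · exact h1 x hx2.symm
        · exact (hhB1 b hb).1 (hx2 ▸ SameCycle.refl _ _)
        · apply (hhB1 b hb).1
          rw [← hsc', ← hx2]
    have hcyc : l.formPerm.IsCycle := by
      apply List.isCycle_formPerm hnd; omega
    have hlsc : l.formPerm.support.card = k := by
      rw [List.support_formPerm_of_nodup l hnd, List.toFinset_card_of_nodup hnd, hlen2]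
      intro x hx
      have := congrArg List.length hx
      simp at this; omega
    have hb1 : ∀ x, l.formPerm x ≠ x → (l.formPerm * β') x = l.formPerm x := by
      intro x hx
      rw [mul_apply, (hdisj x).resolve_left hx]
    have hb2 : ∀ x, β' x ≠ x → (l.formPerm * β') x = β' x := by
      intro x hx
      rw [hdisj.commute.eq, mul_apply, (hdisj x).resolve_right hx]
    have hp1 : ∀ x, l.formPerm x ≠ x → ∀ i : ℕ, ((l.formPerm * β') ^ i) x = (l.formPerm ^ i) x := by
      intro x hx i
      rw [hdisj.commute.mul_pow, mul_apply, pow_apply_eq_self_of_apply_eq_self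
        ((hdisj x).resolve_left hx)]
    have hp2 : ∀ x, β' x ≠ x → ∀ i : ℕ, ((l.formPerm * β') ^ i) x = (β' ^ i) x := by
      intro x hx i
      rw [hdisj.commute.mul_pow, (hdisj.commute.pow_pow i i).eq, mul_apply,
        pow_apply_eq_self_of_apply_eq_self ((hdisj x).resolve_right hx)]
    have hor : ∀ x, (l.formPerm * β') x ≠ x → l.formPerm x ≠ x ∨ β' x ≠ x := by
      intro x hx
      by_contra hcon
      push Not at hcon
      apply hx
      rw [mul_apply, hcon.2, hcon.1]
    refine ⟨l.formPerm * β', ?_, ?_, ?_, ?_⟩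
    · rw [hdisj.cycleType_mul, hcyc.cycleType, hlsc, hct]
      rfl
    · intro x hx
      rcases hor x hx with hx | hx
      · rw [hlsup, hmem] at hx
        rcases hx with hx | hx | hx
        · exact Or.inl hx
        · exact Or.inr ⟨x, by simp [hx], Or.inl rfl⟩
        · exact Or.inr ⟨x, by simp [hx], Or.inl rfl⟩
      · rcases hsup x hx with hx | ⟨b, hb, hx⟩
        · exact Or.inr ⟨h, by simp, Or.inr hx⟩
        · exact Or.inr ⟨b, by simp [hb], hx⟩
    · intro P hPα hPβ
      have hP1 : ∀ x, P (l.formPerm x) ↔ P x := by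
        intro x
        by_cases hx : l.formPerm x = x
        · rw [hx]
        · rw [← hb1 x hx, hPβ]
      have hP2 : ∀ x, P (β' x) ↔ P x := by
        intro x
        by_cases hx : β' x = x
        · rw [hx]
        · rw [← hb2 x hx, hPβ]
      have hP1n : ∀ (i : ℕ) x, P ((l.formPerm ^ i) x) ↔ P x := by
        intro i
        induction i with
        | zero => simp
        | succ i ih => intro x; rw [pow_succ, mul_apply, ih, hP1]
      have hPl : ∀ x ∈ l, P x ↔ P a := by
        intro x hx
        obtain ⟨i, hi⟩ := hcyc.exists_pow_eq ((hlsup (α a)).2 ((hmem _).2 (Or.inl rfl)))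
          ((hlsup x).2 hx)
        rw [← hi, hP1n, hPα]
      have hPB := hconn P hPα hP2
      have hPh := hPl h ((hmem h).2 (by simp))
      intro b hb
      simp only [List.mem_append, List.mem_cons] at hb
      rcases hb with hb | rfl | hb
      · exact hPl b ((hmem b).2 (by simp [hb]))
      · exact hPh
      · rw [hPB b hb, hPh]
    · have hlh : ∀ x, l.formPerm x ≠ x → f x ≤ f h := by
        intro x hx
        rw [hlsup, hmem] at hx
        rcases hx with rfl | hx | rfl
        · rw [hf]; exact (haL h (by simp)).2
        · exact (hAB x hx h (by simp)).2
        · rfl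
      have hhb : ∀ x, β' x ≠ x → f h ≤ f x := by
        intro x hx
        rcases hsup x hx with rfl | ⟨b, hb, rfl | rfl⟩
        · rw [hf]
        · exact (hhB1 _ hb).2
        · rw [hf]; exact (hhB1 _ hb).2
      have hl2 : ∀ x, l.formPerm x ≠ x → l.formPerm (l.formPerm x) ≠ l.formPerm x :=
        fun x hx h' => hx (l.formPerm.injective h')
      have hβ2 : ∀ x, β' x ≠ x → β' (β' x) ≠ β' x :=
        fun x hx h' => hx (β'.injective h')
      intro x y hxy hx hy hi
      rcases hor x hx with hx | hx <;> rcases hor y hy with hy | hy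
      · simp only [hp1 x hx, hp1 y hy] at hi
        rw [hb1 x hx]
        exact formPerm_const l hnd f (hlp.imp fun h => h.2) x y ((hlsup x).1 hx) ((hlsup y).1 hy)
          hxy hi _ ((hlsup _).1 (hl2 x hx)) _ ((hlsup x).1 hx)
      · simp only [hp1 x hx, hp2 y hy] at hi
        rw [hb1 x hx]
        have i0 := hi 0
        have i1 := hi 1
        simp only [pow_zero, pow_one, one_apply] at i0 i1
        have := hlh x hx
        have := hlh _ (hl2 x hx)
        have := hhb y hy
        have := hhb _ (hβ2 y hy)
        omega
      · simp only [hp2 x hx, hp1 y hy] at hi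
        rw [hb2 x hx]
        have i0 := hi 0
        have i1 := hi 1
        simp only [pow_zero, pow_one, one_apply] at i0 i1
        have := hhb x hx
        have := hhb _ (hβ2 x hx)
        have := hlh y hy
        have := hlh _ (hl2 y hy)
        omega
      · simp only [hp2 x hx, hp2 y hy] at hi
        rw [hb2 x hx]
        exact hQ x y hxy hx hy hi

theorem minPer_eq {Ω : Type*} [Fintype Ω] [DecidableEq Ω] (α : Perm Ω) (c : Perm Ω)
    (hc : c ∈ α.cycleFactorsFinset) (x : Ω) (hx : x ∈ c.support) :
    Function.minimalPeriod α x = c.support.card := by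
  have hcyc := (mem_cycleFactorsFinset_iff.1 hc).1
  have hpow : ∀ n : ℕ, (α ^ n) x = (c ^ n) x := by
    intro n
    rw [cycle_is_cycleOf hx hc, cycleOf_pow_apply_self]
  rw [← hcyc.orderOf]
  apply Nat.dvd_antisymm
  · apply Function.IsPeriodicPt.minimalPeriod_dvd
    unfold Function.IsPeriodicPt Function.IsFixedPt
    rw [Equiv.Perm.iterate_eq_pow, hpow, pow_orderOf_eq_one, one_apply]
  · rw [orderOf_dvd_iff_pow_eq_one, hcyc.pow_eq_one_iff' (mem_support.1 hx), ← hpow,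
      ← Equiv.Perm.iterate_eq_pow]
    exact Function.isPeriodicPt_minimalPeriod α x

theorem exists_reps {Ω : Type*} [Fintype Ω] [DecidableEq Ω] [Nonempty Ω] (α : Perm Ω)
    (f : Ω → ℕ) : ∃ L : List Ω, L.length = Multiset.card α.cycleType ∧
      L.Pairwise (fun u v => ¬ α.SameCycle u v ∧ f u ≤ f v) ∧
      ∀ x, α x ≠ x → ∃ a ∈ L, α.SameCycle a x := by
  have h : ∀ c : Perm Ω, c ∈ α.cycleFactorsFinset → ∃ x, x ∈ c.support := by
    intro c hc
    exact (mem_cycleFactorsFinset_iff.1 hc).1.nonempty_support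
  choose! g hg using h
  let L0 := α.cycleFactorsFinset.toList.map g
  have hp : (L0.insertionSort (fun a b => f a ≤ f b)).Perm L0 := List.perm_insertionSort _ _
  have hL0 : L0.Pairwise (fun u v => ¬ α.SameCycle u v) := by
    rw [List.pairwise_map]
    have := α.cycleFactorsFinset.nodup_toList
    refine List.Pairwise.imp_of_mem ?_ this
    intro c c' hc hc' hne hs
    rw [Finset.mem_toList] at hc hc'
    apply hne
    rw [cycle_is_cycleOf (hg c hc) hc, cycle_is_cycleOf (hg c' hc') hc']
    exact hs.cycleOf_eq
  refine ⟨L0.insertionSort (fun a b => f a ≤ f b), ?_, ?_, ?_⟩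
  · rw [hp.length_eq]; simp [L0, cycleType_def]
  · apply List.Pairwise.and
    · exact (hp.pairwise_iff (fun h h' => h h'.symm)).2 hL0
    · have : Std.Total (fun a b => f a ≤ f b) := ⟨fun a b => le_total _ _⟩
      have : IsTrans Ω (fun a b => f a ≤ f b) := ⟨fun a b c => le_trans⟩
      exact List.pairwise_insertionSort _ _
  · intro x hx
    have hc : α.cycleOf x ∈ α.cycleFactorsFinset :=
      cycleOf_mem_cycleFactorsFinset_iff.2 (mem_support.2 hx)
    refine ⟨g (α.cycleOf x), hp.mem_iff.2 (List.mem_map.2 ⟨_, Finset.mem_toList.2 hc, rfl⟩), ?_⟩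
    exact (mem_support_cycleOf_iff.1 (hg _ hc)).1.symm

theorem nu_add_card (D : Multiset ℕ) (h : ∀ x ∈ D, 0 < x) :
    nu D + Multiset.card D = D.sum := by
  induction D using Multiset.induction_on with
  | empty => simp [nu]
  | cons a D ih =>
    have h1 := ih (fun x hx => h x (by simp [hx]))
    have h2 := h a (by simp)
    unfold nu at *
    simp only [Multiset.map_cons, Multiset.sum_cons, Multiset.card_cons]
    omega

theorem filter_facts (D : Multiset ℕ) (h : ∀ x ∈ D, 0 < x) :
    nu (D.filter (2 ≤ ·)) = nu D ∧
    D.filter (2 ≤ ·) + Multiset.replicate (D.sum - (D.filter (2 ≤ ·)).sum) 1 = D := by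
  have hs : D.filter (2 ≤ ·) + D.filter (fun x => ¬ 2 ≤ x) = D := Multiset.filter_add_not _ _
  have h1 : D.filter (fun x => ¬ 2 ≤ x) =
      Multiset.replicate (Multiset.card (D.filter (fun x => ¬ 2 ≤ x))) 1 := by
    rw [Multiset.eq_replicate]
    refine ⟨rfl, fun b hb => ?_⟩
    rw [Multiset.mem_filter] at hb
    have := h b hb.1
    omega
  generalize Multiset.card (D.filter (fun x => ¬ 2 ≤ x)) = m at h1
  rw [h1] at hs
  generalize D.filter (2 ≤ ·) = E at hs
  subst hs
  constructor
  · simp [nu]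
  · simp

/-- If `𝒟 ≠ {[2,…,2,1],[2,…,2,1]}`, `gcd(D₁) = 1` and every part of `D₁` is at
least 3, then for every `α ∈ D₁` there is `β ∈ D₂` such that `⟨α, β⟩` is primitive. -/
theorem statement_7 {Ω : Type*} [Fintype Ω] [DecidableEq Ω] (d : ℕ)
    (hcard : Fintype.card Ω = d) (hd : Odd d) (hdpos : 0 < d)
    (D₁ D₂ : Multiset ℕ) (hP1 : IsPartitionOf d D₁) (hP2 : IsPartitionOf d D₂)
    (hnt1 : D₁ ≠ {d} ∧ D₁ ≠ Multiset.replicate d 1)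
    (hnt2 : D₂ ≠ {d} ∧ D₂ ≠ Multiset.replicate d 1)
    (hsum : nu D₁ + nu D₂ = d - 1) (hord : nu D₂ ≤ nu D₁)
    (hne : ¬ (D₁ = twosAndOne d ∧ D₂ = twosAndOne d))
    (hgcd : D₁.gcd = 1)
    (h3 : ∀ c ∈ D₁, 3 ≤ c) :
    ∀ α : Equiv.Perm Ω, fullCycleType α = D₁ →
      ∃ β : Equiv.Perm Ω, fullCycleType β = D₂ ∧
        SubgroupPrimitive (Subgroup.closure {α, β}) := by
  intro α hα
  have : Nonempty Ω := Fintype.card_pos_iff.1 (by omega)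
  -- no fixed points
  have hfix : Fintype.card Ω - α.support.card = 0 := by
    by_contra hcon
    have : 1 ∈ D₁ := by
      rw [← hα]; unfold fullCycleType
      exact Multiset.mem_add.2 (Or.inr (Multiset.mem_replicate.2 ⟨hcon, rfl⟩))
    have := h3 1 this
    omega
  have hct : α.cycleType = D₁ := by
    rw [← hα]; unfold fullCycleType; rw [hfix]; simp
  have h1 : ∀ x, α x ≠ x := by
    have : α.support = Finset.univ := by
      apply Finset.eq_univ_of_card
      have := Finset.card_le_univ α.support
      omega
    intro x
    rw [← mem_support, this]
    exact Finset.mem_univ x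
  have hmp : ∀ x, Function.minimalPeriod α x ∈ D₁ := by
    intro x
    have hc : α.cycleOf x ∈ α.cycleFactorsFinset :=
      cycleOf_mem_cycleFactorsFinset_iff.2 (mem_support.2 (h1 x))
    rw [minPer_eq α _ hc x (mem_support_cycleOf_iff.2 ⟨SameCycle.refl _ _, mem_support.2 (h1 x)⟩),
      ← hct, cycleType_def]
    exact Multiset.mem_map.2 ⟨_, hc, rfl⟩
  have hmp' : ∀ c ∈ D₁, ∃ x, Function.minimalPeriod α x = c := by
    intro c hc
    rw [← hct, cycleType_def] at hc
    obtain ⟨p, hp, rfl⟩ := Multiset.mem_map.1 hc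
    obtain ⟨x, hx⟩ := (mem_cycleFactorsFinset_iff.1 hp).1.nonempty_support
    exact ⟨x, minPer_eq α p hp x hx⟩
  have hα2 : ∀ x, α (α x) ≠ x := by
    intro x hx
    have : Function.minimalPeriod α x ∣ 2 := by
      apply Function.IsPeriodicPt.minimalPeriod_dvd
      exact hx
    have := Nat.le_of_dvd (by norm_num) this
    have := h3 _ (hmp x)
    omega
  have hfα : ∀ x, Function.minimalPeriod α (α x) = Function.minimalPeriod α x := by
    intro x
    have hk : ∀ n : ℕ, α^[n] (α x) = α (α^[n] x) := fun n => by
      rw [← Function.iterate_succ_apply, Function.iterate_succ_apply']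
    apply Nat.dvd_antisymm
    · apply Function.IsPeriodicPt.minimalPeriod_dvd
      unfold Function.IsPeriodicPt Function.IsFixedPt
      rw [hk, Function.isPeriodicPt_minimalPeriod α x]
    · apply Function.IsPeriodicPt.minimalPeriod_dvd
      unfold Function.IsPeriodicPt Function.IsFixedPt
      have := Function.isPeriodicPt_minimalPeriod α (α x)
      unfold Function.IsPeriodicPt Function.IsFixedPt at this
      rw [hk] at this
      exact α.injective this
  obtain ⟨L, hLlen, hLp, hLc⟩ := exists_reps α (Function.minimalPeriod α)
  obtain ⟨hnuf, hfil⟩ := filter_facts D₂ hP2.1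
  have hn1 := nu_add_card D₁ hP1.1
  rw [hP1.2] at hn1
  rw [hct] at hLlen
  obtain ⟨a, L, rfl⟩ : ∃ a L', L = a :: L' := by
    obtain ⟨x⟩ := (inferInstance : Nonempty Ω)
    obtain ⟨a, ha, -⟩ := hLc x (h1 x)
    exact List.exists_cons_of_ne_nil (List.ne_nil_of_mem ha)
  rw [List.length_cons] at hLlen
  obtain ⟨β, hβct, hsup, hconn, hQ⟩ := build_aux α (Function.minimalPeriod α) hfα h1
    (D₂.filter (2 ≤ ·)).toList a L (by
      intro k hk
      rw [Multiset.mem_toList, Multiset.mem_filter] at hk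
      exact hk.2) hLp (by
      have : ((D₂.filter (2 ≤ ·)).toList.map (· - 1)).sum = nu D₂ := by
        rw [← hnuf]
        unfold nu
        rw [← Multiset.sum_coe, ← Multiset.map_coe, Multiset.coe_toList]
      rw [this]
      omega)
  rw [Multiset.coe_toList] at hβct
  -- transitivity
  have hPall : ∀ P : Ω → Prop, (∀ x, P (α x) ↔ P x) → (∀ x, P (β x) ↔ P x) →
      ∀ x y, P x → P y := by
    intro P hPα hPβ
    have hz : ∀ (i : ℤ) x, P ((α ^ i) x) ↔ P x := by
      intro i
      induction i with
      | zero => simp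
      | succ i ih => intro x; rw [zpow_add_one, mul_apply, ih, hPα]
      | pred i ih => intro x; rw [zpow_sub_one, mul_apply, ih, ← hPα]; simp
    have : ∀ x, P x ↔ P a := by
      intro x
      obtain ⟨b, hb, i, hi⟩ := hLc x (h1 x)
      rw [← hi, hz]
      rcases List.mem_cons.1 hb with rfl | hb
      · rfl
      · exact hconn P hPα hPβ b hb
    intro x y hx
    rwa [this, ← this x]
  set G := Subgroup.closure {α, β} with hG
  have hαG : α ∈ G := Subgroup.subset_closure (by simp)
  have hβG : β ∈ G := Subgroup.subset_closure (by simp)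
  have htrans : SubgroupTransitive G := by
    intro x y
    have key : ∀ g ∈ G, ∀ z, (∃ k ∈ G, k x = g z) ↔ ∃ k ∈ G, k x = z := by
      intro g hg z
      constructor
      · rintro ⟨k, hk, h⟩
        exact ⟨g⁻¹ * k, G.mul_mem (G.inv_mem hg) hk, by simp [h]⟩
      · rintro ⟨k, hk, h⟩
        exact ⟨g * k, G.mul_mem hg hk, by simp [h]⟩
    exact hPall (fun z => ∃ g ∈ G, g x = z) (key α hαG) (key β hβG) x y ⟨1, G.one_mem, rfl⟩
  -- moved points
  have hsup' : ∀ x, β x ≠ x → ∃ b ∈ a :: L, x = b ∨ x = α b := by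
    intro x hx
    rcases hsup x hx with h | ⟨b, hb, h⟩
    · exact ⟨a, by simp, Or.inr h⟩
    · exact ⟨b, by simp [hb], h⟩
  have huniq : ∀ b ∈ a :: L, ∀ c ∈ a :: L, α.SameCycle b c → b = c := by
    intro b hb c hc hs
    by_contra hbc
    have : Std.Symm (fun u v : Ω => u ≠ v → ¬ α.SameCycle u v) :=
      ⟨fun u v h h1 h2 => h (Ne.symm h1) h2.symm⟩
    have := List.Pairwise.forall_of_forall (R := fun u v => u ≠ v → ¬ α.SameCycle u v)
      (fun x _ h => (h rfl).elim) (hLp.imp (fun h _ => h.1)) hb hc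
    exact this hbc hs
  have hpair : ∀ x y, α.SameCycle x y → β x ≠ x → β y ≠ y →
      ∃ b, (x = b ∨ x = α b) ∧ (y = b ∨ y = α b) ∧ b ∈ a :: L ∧ α.SameCycle b x := by
    intro x y hs hx hy
    obtain ⟨b, hb, hxb⟩ := hsup' x hx
    obtain ⟨c, hc, hyc⟩ := hsup' y hy
    have e1 : α.SameCycle b x := by
      rcases hxb with rfl | rfl
      · exact SameCycle.refl _ _
      · exact ⟨1, by simp⟩
    have e2 : α.SameCycle c y := by
      rcases hyc with rfl | rfl
      · exact SameCycle.refl _ _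
      · exact ⟨1, by simp⟩
    have := huniq b hb c hc (e1.trans (hs.trans e2.symm))
    subst this
    exact ⟨b, hxb, hyc, hb, e1⟩
  refine ⟨β, ?_, htrans, ?_⟩
  · unfold fullCycleType
    rw [← sum_cycleType, hβct, hcard, ← hP2.2]
    exact hfil
  · intro Λ hΛ
    obtain ⟨⟨u, hu⟩, hblk⟩ := hΛ
    by_contra htriv
    unfold TrivialBlock at htriv
    push Not at htriv
    obtain ⟨hsing, huniv⟩ := htriv
    have hblk' : ∀ g ∈ G, ∀ v ∈ Λ, g v ∈ Λ → ∀ w, g w ∈ Λ ↔ w ∈ Λ := by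
      intro g hg v hv hgv w
      have himg : ⇑g '' Λ = Λ := by
        rcases hblk g hg with h | h
        · exact h
        · exact (Set.disjoint_left.1 h ⟨v, hv, rfl⟩ hgv).elim
      constructor
      · intro h
        rw [← himg] at h
        obtain ⟨w', hw', h⟩ := h
        rwa [← g.injective h]
      · intro h
        rw [← himg]
        exact ⟨w, h, rfl⟩
    let r : Setoid Ω :=
      { r := fun x y => ∃ g ∈ G, g x ∈ Λ ∧ g y ∈ Λ
        iseqv := by
          refine ⟨?_, ?_, ?_⟩
          · intro x
            obtain ⟨g, hg, h⟩ := htrans x u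
            exact ⟨g, hg, by rwa [h], by rwa [h]⟩
          · rintro x y ⟨g, hg, h, h'⟩
            exact ⟨g, hg, h', h⟩
          · rintro x y z ⟨g, hg, hx, hy⟩ ⟨k, hk, hy', hz⟩
            refine ⟨k, hk, ?_, hz⟩
            have := (hblk' (k * g⁻¹) (G.mul_mem hk (G.inv_mem hg)) (g y) hy (by simpa using hy')
              (g x)).2 hx
            simpa using this }
    have hrinv : ∀ k ∈ G, ∀ x y, r (k x) (k y) ↔ r x y := by
      intro k hk x y
      constructor
      · rintro ⟨g, hg, hx, hy⟩
        exact ⟨g * k, G.mul_mem hg hk, hx, hy⟩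
      · rintro ⟨g, hg, hx, hy⟩
        exact ⟨g * k⁻¹, G.mul_mem hg (G.inv_mem hk), by simpa using hx, by simpa using hy⟩
    have hall := core_aux α β r (hrinv α hαG) (hrinv β hβG) hPall (by
        intro n hn
        have : n ∣ D₁.gcd := by
          rw [Multiset.dvd_gcd]
          intro c hc
          obtain ⟨x, rfl⟩ := hmp' c hc
          exact hn x
        rw [hgcd] at this
        exact Nat.dvd_one.1 this) h1 (by
        intro x y z hxy hxz nxy nxz nyz hx hy
        by_contra hz
        obtain ⟨b, hb1, hb2, hb, hbx⟩ := hpair x y hxy hx hy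
        obtain ⟨c, hc1, hc2, hc, hcx⟩ := hpair x z hxz hx hz
        have := huniq b hb c hc (hbx.trans hcx.symm)
        subst this
        rcases hb1 with h | h <;> rcases hb2 with h' | h' <;> rcases hc2 with h'' | h'' <;>
          first
          | exact nxy (h.trans h'.symm)
          | exact nxz (h.trans h''.symm)
          | exact nyz (h'.trans h''.symm)) (by
        intro x y hxy nxy hx hy
        obtain ⟨b, hb1, hb2, hb, hbx⟩ := hpair x y hxy hx hy
        refine ⟨?_, hα2 x⟩
        rcases hb1 with h | h <;> rcases hb2 with h' | h'
        · exact (nxy (h.trans h'.symm)).elim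
        · exact Or.inl (h ▸ h')
        · exact Or.inr (h' ▸ h)
        · exact (nxy (h.trans h'.symm)).elim) hQ (by
        intro x
        obtain ⟨v, hv, hvu⟩ : ∃ v ∈ Λ, v ≠ u := by
          by_contra hno
          push Not at hno
          exact hsing u (Set.eq_singleton_iff_unique_mem.2 ⟨hu, hno⟩)
        obtain ⟨g, hg, h⟩ := htrans x u
        refine ⟨g⁻¹ v, ?_, g, hg, by rwa [h], by simpa using hv⟩
        intro h'
        apply hvu
        rw [← h, ← h']; simp)
    apply huniv
    apply Set.eq_univ_of_forall
    intro y
    obtain ⟨g, hg, h, h'⟩ := hall u y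
    exact (hblk' g hg u hu h y).1 h'
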